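/- Let T and D be the permutations of ℝ given by T(x) = x + 1 and D(x) = 2x. Then the subgroup of the permutation group of ℝ generated by T and D is isomorphic to the Baumslag–Solitar group BS(1, 2), namely the group presented by two generators a, b with the single relation b·a·b⁻¹ = a². -/

import Mathlib

/-- Translation of the time line by one time-unit: `T x = x + 1`. -/
def T18 : Equiv.Perm ℝ := Equiv.addRight (1 : ℝ)

/-- Dilation of the time line by a factor 2: `D x = 2 * x`. -/
noncomputable def D18 : Equiv.Perm ℝ := Equiv.mulLeft₀ (2 : ℝ) two_ne_zero

/-- The relator `b * a * b⁻¹ * a⁻²` of the Baumslag–Solitar group `BS(1, 2)` in the free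
group on two generators (`a` is generator `0`, `b` is generator `1`). -/
def BS12rels : Set (FreeGroup (Fin 2)) :=
  {FreeGroup.of 1 * FreeGroup.of 0 * (FreeGroup.of 1)⁻¹ * (FreeGroup.of 0)⁻¹ *
    (FreeGroup.of 0)⁻¹}

/-!
In a group generated by `a, b` with `b a b⁻¹ = a ^ q`, every element has the form
`b⁻ᵐ aᵏ bⁿ`. Let `c, d` be the images of `a, b` in another group, with `c` of infinite order and
`q ≠ ±1`. If `b⁻ᵐ aᵏ bⁿ` is mapped to `1`, then `cᵏ` is a power of `d`, hence commutes with `d`, so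
`c ^ (q * k) = c ^ k` and `k = 0`. Moreover `dʲ = 1` with `j > 0` would give `c = c ^ (q ^ j)`, so
`d` has infinite order and `m = n`. Thus `BS(1, q)` has no proper quotient in which `a` keeps
infinite order, and it remains to observe that a translation has infinite order.
-/

section SemiconjByZPow

variable {G : Type*} [Group G] {a b : G} {q : ℤ}

theorem semiconjBy_pow_zpow (h : SemiconjBy b a (a ^ q)) (m : ℕ) (k : ℤ) :
    SemiconjBy (b ^ m) (a ^ k) (a ^ (q ^ m * k)) := by
  induction m with
  | zero => simp
  | succ m ih =>
    have hconj : SemiconjBy b (a ^ (q ^ m * k)) (a ^ (q ^ (m + 1) * k)) := by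
      simpa only [← zpow_mul, ← mul_assoc, ← pow_succ'] using h.zpow_right (q ^ m * k)
    simpa only [pow_succ'] using hconj.mul_left ih

theorem exists_eq_inv_pow_mul_zpow_mul_pow (h : SemiconjBy b a (a ^ q)) {x : G}
    (hx : x ∈ Subgroup.closure {a, b}) :
    ∃ (m n : ℕ) (k : ℤ), x = (b ^ m)⁻¹ * a ^ k * b ^ n := by
  have zpow_mul_normalForm (e k : ℤ) (m n : ℕ) :
      a ^ e * ((b ^ m)⁻¹ * a ^ k * b ^ n) = (b ^ m)⁻¹ * a ^ (q ^ m * e + k) * b ^ n := by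
    have hcomm : a ^ e * (b ^ m)⁻¹ = (b ^ m)⁻¹ * a ^ (q ^ m * e) :=
      (semiconjBy_pow_zpow h m e).inv_symm_left.eq.symm
    rw [zpow_add, ← mul_assoc, ← mul_assoc, hcomm, ← mul_assoc]
  induction hx using Subgroup.closure_induction_left with
  | one => exact ⟨0, 0, 0, by simp⟩
  | mul_left g hg y _ ih =>
    obtain ⟨m, n, k, rfl⟩ := ih
    rcases hg with rfl | rfl
    · exact ⟨m, n, _, by simpa only [zpow_one] using zpow_mul_normalForm 1 k m n⟩
    · cases m with
      | zero =>
        refine ⟨0, n + 1, q * k, ?_⟩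
        have hcomm : g * a ^ k = a ^ (q * k) * g := by
          simpa only [pow_one] using (semiconjBy_pow_zpow h 1 k).eq
        simp only [pow_zero, inv_one, one_mul, ← mul_assoc, hcomm, pow_succ']
      | succ m =>
        exact ⟨m, n, k, by simp only [pow_succ, mul_inv_rev, mul_assoc, mul_inv_cancel_left]⟩
  | inv_mul_cancel g hg y _ ih =>
    obtain ⟨m, n, k, rfl⟩ := ih
    rcases hg with rfl | rfl
    · exact ⟨m, n, _, by simpa only [zpow_neg_one] using zpow_mul_normalForm (-1) k m n⟩
    · exact ⟨m + 1, n, k, by simp only [pow_succ, mul_inv_rev, mul_assoc]⟩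

theorem eq_zero_of_commute_zpow (h : SemiconjBy b a (a ^ q)) (hq : q ≠ 1)
    (ha : ¬IsOfFinOrder a) {k : ℤ} (hk : Commute b (a ^ k)) : k = 0 := by
  have hconj : a ^ (q * k) = a ^ k := by
    rw [zpow_mul]
    exact mul_right_cancel ((h.zpow_right k).eq.symm.trans hk.eq)
  have hmul : q * k = k := injective_zpow_iff_not_isOfFinOrder.mpr ha hconj
  by_contra hk0
  exact hq ((mul_eq_right₀ hk0).mp hmul)

theorem not_isOfFinOrder_of_semiconjBy_zpow (h : SemiconjBy b a (a ^ q)) (hq : ¬IsUnit q)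
    (ha : ¬IsOfFinOrder a) : ¬IsOfFinOrder b := by
  rw [isOfFinOrder_iff_pow_eq_one]
  rintro ⟨j, hj, hbj⟩
  have hconj : a ^ q ^ j = a ^ (1 : ℤ) := by
    simpa [SemiconjBy, hbj, eq_comm] using semiconjBy_pow_zpow h j 1
  have hpow : q ^ j = 1 := injective_zpow_iff_not_isOfFinOrder.mpr ha hconj
  exact hq (.of_pow_eq_one hpow hj.ne')

theorem injective_of_semiconjBy_zpow {H : Type*} [Group H] (h : SemiconjBy b a (a ^ q))
    (hgen : Subgroup.closure {a, b} = ⊤) (hq : ¬IsUnit q) (f : G →* H)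
    (ha : ¬IsOfFinOrder (f a)) : Function.Injective f := by
  have hf : SemiconjBy (f b) (f a) (f a ^ q) := by simpa only [map_zpow] using h.map f
  rw [injective_iff_map_eq_one]
  intro x hx
  obtain ⟨m, n, k, rfl⟩ := exists_eq_inv_pow_mul_zpow_mul_pow h (hgen ▸ Subgroup.mem_top x)
  have hker : f a ^ k * f b ^ n = f b ^ m := by
    rw [mul_assoc, map_mul, map_inv, inv_mul_eq_one] at hx
    simpa only [map_mul, map_pow, map_zpow] using hx.symm
  have hcomm : Commute (f b) (f a ^ k) := by
    rw [eq_mul_inv_of_mul_eq hker]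
    exact (Commute.self_pow _ m).mul_right (Commute.self_pow _ n).inv_right
  obtain rfl : k = 0 := eq_zero_of_commute_zpow hf (fun hq1 ↦ hq (hq1 ▸ isUnit_one)) ha hcomm
  have hpow : f b ^ n = f b ^ m := by simpa only [zpow_zero, one_mul] using hker
  obtain rfl : n = m := injective_pow_iff_not_isOfFinOrder.mpr
    (not_isOfFinOrder_of_semiconjBy_zpow hf hq ha) hpow
  simp

end SemiconjByZPow

/-- The relator `b aᵐ b⁻¹ a⁻ⁿ` of the Baumslag–Solitar group `BS(m, n)`, with `a` the generator
`0` and `b` the generator `1`, as in `BS12rels`. -/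
def baumslagSolitarRels (m n : ℤ) : Set (FreeGroup (Fin 2)) :=
  {FreeGroup.of 1 * FreeGroup.of 0 ^ m * (FreeGroup.of 1)⁻¹ * (FreeGroup.of 0 ^ n)⁻¹}

/-- The Baumslag–Solitar group `BS(m, n) = ⟨a, b | b aᵐ b⁻¹ = aⁿ⟩`. -/
abbrev BaumslagSolitar (m n : ℤ) : Type :=
  PresentedGroup (baumslagSolitarRels m n)

theorem BS12rels_eq_baumslagSolitarRels : BS12rels = baumslagSolitarRels 1 2 := by
  simp only [BS12rels, baumslagSolitarRels, zpow_one, zpow_two, mul_inv_rev, mul_assoc]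

namespace BaumslagSolitar

variable {m n q : ℤ}

theorem semiconjBy_of_one_of_zero_zpow :
    SemiconjBy (.of 1 : BaumslagSolitar m n) (.of 0 ^ m) (.of 0 ^ n) := by
  rw [SemiconjBy, ← mul_inv_eq_iff_eq_mul, ← mul_inv_eq_one]
  exact PresentedGroup.one_of_mem (Set.mem_singleton _)

theorem closure_pair_of_eq_top :
    Subgroup.closure {(.of 0 : BaumslagSolitar m n), .of 1} = ⊤ := by
  rw [← PresentedGroup.closure_range_of]
  congr 1
  ext x
  simp [Fin.exists_fin_two, eq_comm]

variable {H : Type*} [Group H] {c d : H}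

/-- The universal property of `BS(m, n)`: the homomorphism sending `a` to `c` and `b` to `d`,
where `d cᵐ d⁻¹ = cⁿ`. -/
def lift (h : SemiconjBy d (c ^ m) (c ^ n)) : BaumslagSolitar m n →* H :=
  PresentedGroup.toGroup (f := ![c, d]) <| by
    rintro _ rfl
    simpa [mul_inv_eq_one, mul_inv_eq_iff_eq_mul] using h.eq

theorem lift_of_zero (h : SemiconjBy d (c ^ m) (c ^ n)) : lift h (.of 0) = c :=
  PresentedGroup.toGroup.of _

theorem lift_of_one (h : SemiconjBy d (c ^ m) (c ^ n)) : lift h (.of 1) = d :=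
  PresentedGroup.toGroup.of _

theorem range_lift (h : SemiconjBy d (c ^ m) (c ^ n)) :
    (lift h).range = Subgroup.closure {c, d} := by
  rw [MonoidHom.range_eq_map, ← closure_pair_of_eq_top, MonoidHom.map_closure, Set.image_pair,
    lift_of_zero, lift_of_one]

theorem lift_injective (h : SemiconjBy d (c ^ (1 : ℤ)) (c ^ q)) (hq : ¬IsUnit q)
    (hc : ¬IsOfFinOrder c) : Function.Injective (lift h) := by
  have hrel : SemiconjBy (.of 1 : BaumslagSolitar 1 q) (.of 0) (.of 0 ^ q) := by
    simpa only [zpow_one] using semiconjBy_of_one_of_zero_zpow (m := 1) (n := q)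
  exact injective_of_semiconjBy_zpow hrel closure_pair_of_eq_top hq _ (by rwa [lift_of_zero])

theorem nonempty_closure_pair_mulEquiv (h : SemiconjBy d c (c ^ q)) (hq : ¬IsUnit q)
    (hc : ¬IsOfFinOrder c) :
    Nonempty (Subgroup.closure {c, d} ≃* BaumslagSolitar 1 q) := by
  have hrel : SemiconjBy d (c ^ (1 : ℤ)) (c ^ q) := by rwa [zpow_one]
  rw [← range_lift hrel]
  exact ⟨(MonoidHom.ofInjective (lift_injective hrel hq hc)).symm⟩

end BaumslagSolitar

theorem not_isOfFinOrder_addRight_one {R : Type*} [AddGroupWithOne R] [CharZero R] :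
    ¬IsOfFinOrder (Equiv.addRight (1 : R)) := by
  rw [isOfFinOrder_iff_pow_eq_one]
  rintro ⟨n, hn, hpow⟩
  have hcast : (n : R) = 0 := by simpa using DFunLike.congr_fun hpow (0 : R)
  exact hn.ne' (Nat.cast_eq_zero.mp hcast)

theorem semiconjBy_mulLeft_addRight_one {R : Type*} [Ring R] {u : Rˣ} {q : ℤ}
    (hu : (u : R) = q) :
    SemiconjBy u.mulLeft (Equiv.addRight (1 : R)) (Equiv.addRight 1 ^ q) := by
  ext x
  simp [mul_add, hu]

theorem stmt18_general {R : Type*} [Ring R] [CharZero R] {u : Rˣ} {q : ℤ} (hu : (u : R) = q)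
    (hq : ¬IsUnit q) :
    Nonempty (Subgroup.closure {Equiv.addRight (1 : R), u.mulLeft} ≃* BaumslagSolitar 1 q) :=
  BaumslagSolitar.nonempty_closure_pair_mulEquiv (semiconjBy_mulLeft_addRight_one hu) hq
    not_isOfFinOrder_addRight_one

/-- The subgroup of `Equiv.Perm ℝ` generated by the translation `T x = x + 1`
and the dilation `D x = 2x` is isomorphic to the Baumslag–Solitar group
`BS(1, 2) = ⟨a, b | b a b⁻¹ = a²⟩`. -/
theorem stmt18 :
    Nonempty (↥(Subgroup.closure {T18, D18}) ≃* PresentedGroup BS12rels) := by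
  rw [BS12rels_eq_baumslagSolitarRels]
  exact stmt18_general (u := Units.mk0 (2 : ℝ) two_ne_zero) (by simp) (by decide)
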